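/- Let w = x^{a_1}y^{b_1}···x^{a_r}y^{b_r} be a reduced word of complexity r such that over ℚ its trace polynomial factors as f_w(s,u,t) = D_r(q(s,u,t)) for some polynomial q ∈ ℚ[s,u,t]. Then w = (x^{a_1}y^{b_1})^r; that is, a_i = a_1 and b_i = b_1 for all i = 1,…,r. -/

import Mathlib

open Matrix Polynomial

abbrev SL2 (K : Type) [CommRing K] : Type := Matrix.SpecialLinearGroup (Fin 2) K

abbrev PSL2 (K : Type) [CommRing K] : Type := SL2 K ⧸ Subgroup.center (SL2 K)

/-- Evaluation of a word `w ∈ F₂` at a pair of group elements. -/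
def wordEval {G : Type*} [Group G] (w : FreeGroup (Fin 2)) (g₁ g₂ : G) : G :=
  (FreeGroup.lift ![g₁, g₂]) w

/-- The word map `P_{w,G} : G × G → G` for `G = SL(2,K)`. -/
def wordMap (w : FreeGroup (Fin 2)) (K : Type) [CommRing K] :
    SL2 K × SL2 K → SL2 K := fun g => wordEval w g.1 g.2

/-- The point `(tr x, tr xy, tr y)`. -/
def trPoint {K : Type} [CommRing K] (x y : SL2 K) : Fin 3 → K :=
  ![Matrix.trace (x : Matrix (Fin 2) (Fin 2) K),
    Matrix.trace ((x * y : SL2 K) : Matrix (Fin 2) (Fin 2) K),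
    Matrix.trace (y : Matrix (Fin 2) (Fin 2) K)]

/-- `f ∈ ℤ[s,u,t]` is the trace polynomial of the word `w`. -/
def IsTracePolynomial (w : FreeGroup (Fin 2)) (f : MvPolynomial (Fin 3) ℤ) : Prop :=
  ∀ (K : Type) [CommRing K], ∀ x y : SL2 K,
    Matrix.trace ((wordEval w x y : SL2 K) : Matrix (Fin 2) (Fin 2) K) =
      MvPolynomial.eval (trPoint x y) (MvPolynomial.map (Int.castRingHom K) f)

/-- `f : X → Y` is `ε`-equidistributed. -/
def IsEquidistributed {X Y : Type*} (f : X → Y) (ε : ℝ) : Prop :=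
  ∃ Y' : Set Y,
    (1 - ε) * (Nat.card Y) < (Nat.card Y' : ℝ) ∧
    ∀ y ∈ Y',
      |(Nat.card {x : X // f x = y} : ℝ) - (Nat.card X : ℝ) / (Nat.card Y)| <
        ε * (Nat.card X) / (Nat.card Y)

/-- The family of word maps on `SL(2,p^n)` is `p`-equidistributed. -/
def IsPEquidistributed (w : FreeGroup (Fin 2)) (p : ℕ) (hp : p.Prime) : Prop :=
  letI : Fact p.Prime := ⟨hp⟩
  ∃ ε : ℕ → ℝ,
    Filter.Tendsto (fun n : ℕ => ε (p ^ n)) Filter.atTop (nhds 0) ∧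
    ∀ᶠ n : ℕ in Filter.atTop,
      IsEquidistributed (wordMap w (GaloisField p n)) (ε (p ^ n))

/-- The family of word maps on `SL(2,q)`, `q` ranging over all prime powers,
is equidistributed. -/
def IsEquidistributedFamily (w : FreeGroup (Fin 2)) : Prop :=
  ∃ ε : ℕ → ℝ,
    Filter.Tendsto ε Filter.atTop (nhds 0) ∧
    ∀ (p : ℕ) (hp : p.Prime),
      letI : Fact p.Prime := ⟨hp⟩
      ∀ᶠ n : ℕ in Filter.atTop,
        IsEquidistributed (wordMap w (GaloisField p n)) (ε (p ^ n))

/-- Reduction of an integral polynomial mod `p`. -/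
noncomputable def reduceMod (p : ℕ) (P : MvPolynomial (Fin 3) ℤ) : MvPolynomial (Fin 3) (ZMod p) :=
  MvPolynomial.map (Int.castRingHom (ZMod p)) P

/-- `P = h ∘ Q` with `deg Q ≥ 1`, `deg h ≥ 2`. -/
def IsCompositePoly (F : Type) [CommRing F] (P : MvPolynomial (Fin 3) F) : Prop :=
  ∃ (Q : MvPolynomial (Fin 3) F) (h : Polynomial F),
    1 ≤ Q.totalDegree ∧ 2 ≤ h.natDegree ∧ P = Polynomial.aeval Q h

def IsPComposite (p : ℕ) (P : MvPolynomial (Fin 3) ℤ) : Prop :=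
  IsCompositePoly (ZMod p) (reduceMod p P)

/-- `h` is a permutation polynomial of every finite extension of `F_p`. -/
def IsPermAllExt (p : ℕ) (h : Polynomial (ZMod p)) : Prop :=
  ∀ (K : Type) [Field K] [Algebra (ZMod p) K] [Finite K],
    Function.Bijective fun z : K => Polynomial.aeval z h

def IsPSpecial (p : ℕ) (P : MvPolynomial (Fin 3) ℤ) : Prop :=
  IsPComposite p P ∧
    ∃ (Q : MvPolynomial (Fin 3) (ZMod p)) (h : Polynomial (ZMod p)),
      1 ≤ Q.totalDegree ∧ 2 ≤ h.natDegree ∧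
      reduceMod p P = Polynomial.aeval Q h ∧ IsPermAllExt p h

def AlmostNoncomposite (P : MvPolynomial (Fin 3) ℤ) : Prop :=
  ∀ p : ℕ, p.Prime → ¬ IsPComposite p P ∨ IsPSpecial p P

/-- The reduced word `x^{a₁}y^{b₁} ⋯ x^{a_r}y^{b_r}`. -/
def wordOf {r : ℕ} (a b : Fin r → ℤ) : FreeGroup (Fin 2) :=
  (List.ofFn fun i : Fin r =>
    FreeGroup.of (0 : Fin 2) ^ a i * FreeGroup.of (1 : Fin 2) ^ b i).prod

section aux

lemma aux_dickson_deg (n : ℕ) :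
    ((dickson 1 (1 : ℝ) (n+1)).Monic ∧ (dickson 1 (1 : ℝ) (n+1)).natDegree = n+1) ∧
    ((dickson 1 (1 : ℝ) (n+2)).Monic ∧ (dickson 1 (1 : ℝ) (n+2)).natDegree = n+2) := by
  have step : ∀ (m : ℕ) (P Q : ℝ[X]), P.Monic → P.natDegree = m + 1 → Q.natDegree ≤ m →
      (X * P - C 1 * Q).Monic ∧ (X * P - C 1 * Q).natDegree = m + 2 := by
    intro m P Q hP hPd hQ
    have h1 : (X * P).Monic := monic_X.mul hP
    have h2 : (X * P).natDegree = m + 2 := by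
      rw [monic_X.natDegree_mul hP, natDegree_X, hPd]; ring
    have h3 : (C 1 * Q).natDegree < (X * P).natDegree := by
      rw [h2]; simp only [map_one, one_mul]; omega
    refine ⟨h1.sub_of_left (degree_lt_degree h3), ?_⟩
    rw [natDegree_sub_eq_left_of_natDegree_lt h3, h2]
  induction n with
  | zero =>
    refine ⟨⟨?_, ?_⟩, ?_⟩
    · simp [monic_X]
    · simp
    · rw [dickson_add_two]
      apply step
      · simp [monic_X]
      · simp
      · rw [dickson_zero]
        have : (3 - ((1:ℕ) : ℝ[X])) = C 2 := by
          rw [map_ofNat]; norm_num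
        rw [this]; simp
  | succ n ih =>
    refine ⟨ih.2, ?_⟩
    rw [dickson_add_two]
    exact step (n+1) _ _ ih.2.1 ih.2.2 ih.1.2.le

lemma aux_dickson_cosh (r : ℕ) (θ : ℝ) :
    (dickson 1 (1 : ℝ) r).eval (2 * Real.cosh θ) = 2 * Real.cosh (r * θ) := by
  have h := dickson_one_one_eval_add_inv (Real.exp θ) (Real.exp (-θ))
    (by rw [← Real.exp_add]; simp) r
  rw [Real.cosh_eq, Real.cosh_eq]
  rw [← Real.exp_nat_mul, ← Real.exp_nat_mul] at h
  have e1 : 2 * ((Real.exp θ + Real.exp (-θ)) / 2) = Real.exp θ + Real.exp (-θ) := by ring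
  rw [e1, h]
  rw [mul_neg]; ring

lemma aux_dickson_neg_cosh (r : ℕ) (θ : ℝ) :
    (dickson 1 (1 : ℝ) r).eval (-(2 * Real.cosh θ)) = (-1)^r * (2 * Real.cosh (r * θ)) := by
  have h := dickson_one_one_eval_add_inv (-Real.exp θ) (-Real.exp (-θ))
    (by rw [neg_mul_neg, ← Real.exp_add]; simp) r
  rw [Real.cosh_eq, Real.cosh_eq]
  rw [neg_pow, neg_pow (Real.exp (-θ)), ← Real.exp_nat_mul, ← Real.exp_nat_mul] at h
  have e1 : -(2 * ((Real.exp θ + Real.exp (-θ)) / 2)) = -Real.exp θ + -Real.exp (-θ) := by ring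
  rw [e1, h]
  rw [mul_neg]; ring

lemma aux_dickson_cos (r : ℕ) (θ : ℝ) :
    (dickson 1 (1 : ℝ) r).eval (2 * Real.cos θ) = 2 * Real.cos (r * θ) := by
  let _ : Invertible (2:ℝ) := invertibleOfNonzero two_ne_zero
  rw [dickson_one_one_eq_chebyshev_T]
  simp [eval_comp, Chebyshev.T_real_cos]

lemma aux_abs_le (r : ℕ) (hr : 0 < r) (g φ : ℝ)
    (h : (dickson 1 (1 : ℝ) r).eval g = 2 * Real.cosh (r * φ)) :
    |g| ≤ 2 * Real.cosh φ ∧ (φ ≠ 0 → |g| = 2 * Real.cosh φ) := by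
  have hr' : (0:ℝ) < r := by exact_mod_cast hr
  rcases le_or_gt 2 |g| with hg | hg
  · have key : |g| = 2 * Real.cosh φ := by
      set θ := Real.arcosh (|g|/2) with hθ
      have h1 : |g| = 2 * Real.cosh θ := by
        rw [hθ, Real.cosh_arcosh (by linarith)]; ring
      have h2 : |(dickson 1 (1 : ℝ) r).eval g| = 2 * Real.cosh (r * θ) := by
        have hp := Real.cosh_pos (r * θ)
        rcases abs_choice g with hh | hh
        · rw [← hh, h1, aux_dickson_cosh, abs_of_pos (by positivity)]
        · have : g = -(2 * Real.cosh θ) := by linarith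
          rw [this, aux_dickson_neg_cosh, abs_mul, abs_pow, abs_neg, abs_one, one_pow, one_mul,
            abs_of_pos (by positivity)]
      have hp := Real.cosh_pos (r * φ)
      rw [h, abs_of_pos (by positivity)] at h2
      have h3 : Real.cosh (r * φ) = Real.cosh (r * θ) := by linarith
      have h4 : |(r:ℝ) * φ| = |r * θ| :=
        le_antisymm (Real.cosh_le_cosh.1 h3.le) (Real.cosh_le_cosh.1 h3.ge)
      rw [abs_mul, abs_mul] at h4
      have h5 : |φ| = |θ| := mul_left_cancel₀ (abs_pos.2 hr'.ne').ne' h4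
      rw [h1, ← Real.cosh_abs θ, ← h5, Real.cosh_abs]
    exact ⟨key.le, fun _ => key⟩
  · have h1 := Real.one_le_cosh φ
    refine ⟨by linarith, fun hφ => ?_⟩
    exfalso
    have hg' := abs_lt.1 hg
    have h2 : g = 2 * Real.cos (Real.arccos (g/2)) := by
      rw [Real.cos_arccos (by linarith) (by linarith)]; ring
    rw [h2, aux_dickson_cos] at h
    have h3 := Real.cos_le_one (r * Real.arccos (g/2))
    have h4 : 1 < Real.cosh (r * φ) := Real.one_lt_cosh.2 (mul_ne_zero hr'.ne' hφ)
    linarith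

lemma aux_eval_dickson {r : ℕ} (w : FreeGroup (Fin 2))
    (f : MvPolynomial (Fin 3) ℤ) (hf : IsTracePolynomial w f)
    (q : MvPolynomial (Fin 3) ℚ)
    (hdec : MvPolynomial.map (Int.castRingHom ℚ) f =
      Polynomial.aeval q (Polynomial.dickson 1 (1 : ℚ) r))
    (K : Type) [CommRing K] [Algebra ℚ K] (x y : SL2 K) :
    Matrix.trace ((wordEval w x y : SL2 K) : Matrix (Fin 2) (Fin 2) K) =
      (dickson 1 (1 : K) r).eval (MvPolynomial.aeval (trPoint x y) q) := by
  rw [hf K x y]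
  have h1 : Int.castRingHom K = (algebraMap ℚ K).comp (Int.castRingHom ℚ) := RingHom.ext_int _ _
  rw [h1, ← MvPolynomial.map_map, hdec, MvPolynomial.eval_map, ← MvPolynomial.aeval_def,
    ← Polynomial.aeval_algHom_apply, Polynomial.aeval_def, Polynomial.eval₂_eq_eval_map,
    map_dickson, map_one]

lemma aux_zpow {G : Type*} [Group G] (φ : ℤ → G) (h : ∀ m n, φ (m + n) = φ m * φ n) (n : ℤ) :
    φ 1 ^ n = φ n := by
  let F : Multiplicative ℤ →* G := MonoidHom.mk' (fun m => φ m.toAdd) (fun m n => h _ _)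
  have : F (Multiplicative.ofAdd 1 ^ n) = F (Multiplicative.ofAdd 1) ^ n := map_zpow _ _ _
  rw [← ofAdd_zsmul] at this
  simpa [F] using this.symm

lemma aux_wordEval {G : Type*} [Group G] {r : ℕ} (a b : Fin r → ℤ) (x y : G) :
    wordEval (wordOf a b) x y = (List.ofFn fun i => x ^ a i * y ^ b i).prod := by
  unfold wordEval wordOf
  rw [map_list_prod, List.map_ofFn]
  congr 2
  ext i
  simp

/-- diagonal matrices -/
noncomputable def auxDiag (t : ℝ) : SL2 ℝ :=
  ⟨!![Real.exp t, 0; 0, Real.exp (-t)], by rw [Matrix.det_fin_two_of, ← Real.exp_add]; simp⟩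

lemma auxDiag_add (s t : ℝ) : auxDiag (s + t) = auxDiag s * auxDiag t := by
  apply Subtype.ext
  change (auxDiag (s + t) : Matrix (Fin 2) (Fin 2) ℝ) = _
  rw [Matrix.SpecialLinearGroup.coe_mul]
  simp [auxDiag, Real.exp_add, mul_comm]

lemma auxDiag_trace (t : ℝ) : Matrix.trace (auxDiag t : Matrix (Fin 2) (Fin 2) ℝ) =
    2 * Real.cosh t := by
  simp [auxDiag, Matrix.trace_fin_two, Real.cosh_eq]; ring

lemma auxDiag_zpow (t : ℝ) (n : ℤ) : auxDiag t ^ n = auxDiag (n * t) := by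
  have := aux_zpow (fun n : ℤ => auxDiag (n * t))
    (fun m n => by rw [← auxDiag_add]; congr 1; push_cast; ring) n
  simpa using this

lemma auxDiag_sum (l : List ℝ) : (l.map auxDiag).prod = auxDiag l.sum := by
  induction l with
  | nil => apply Subtype.ext; simp [auxDiag, Matrix.one_fin_two]
  | cons t l ih => simp [ih, auxDiag_add]

lemma auxDiag_word {r : ℕ} (a b : Fin r → ℤ) (p q : ℝ) :
    Matrix.trace ((wordEval (wordOf a b) (auxDiag p) (auxDiag q) : SL2 ℝ) :
      Matrix (Fin 2) (Fin 2) ℝ) = 2 * Real.cosh (p * ∑ i, (a i : ℝ) + q * ∑ i, (b i : ℝ)) := by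
  have : (List.ofFn fun i => auxDiag p ^ a i * auxDiag q ^ b i) =
      (List.ofFn fun i => (a i : ℝ) * p + b i * q).map auxDiag := by
    rw [List.map_ofFn]; congr 1; ext1 i
    simp [auxDiag_zpow, auxDiag_add]
  rw [aux_wordEval, this, auxDiag_sum, auxDiag_trace, List.sum_ofFn, Finset.sum_add_distrib,
    ← Finset.sum_mul, ← Finset.sum_mul]
  congr 2; ring

/-- upper triangular matrices -/
noncomputable def auxUp (p t : ℝ) : SL2 ℝ[X] :=
  ⟨!![C (Real.exp (t * p)), C (Real.sinh (t * p) / Real.sinh p); 0, C (Real.exp (-(t * p)))], by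
    rw [Matrix.det_fin_two_of, ← C_mul, ← Real.exp_add]; simp⟩

/-- lower triangular matrices -/
noncomputable def auxLo (Z : ℝ[X]) (p t : ℝ) : SL2 ℝ[X] :=
  ⟨!![C (Real.exp (t * p)), 0; C (Real.sinh (t * p) / Real.sinh p) * Z, C (Real.exp (-(t * p)))], by
    rw [Matrix.det_fin_two_of, ← C_mul, ← Real.exp_add]; simp⟩

lemma aux_sinh_add (s t p : ℝ) : Real.sinh ((s+t)*p) / Real.sinh p =
    Real.exp (s * p) * (Real.sinh (t * p) / Real.sinh p) +
      (Real.sinh (s*p) / Real.sinh p) * Real.exp (-(t*p)) := by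
  have : Real.sinh ((s+t)*p) = Real.exp (s * p) * Real.sinh (t * p) +
      Real.sinh (s*p) * Real.exp (-(t*p)) := by
    simp only [Real.sinh_eq, add_mul, Real.exp_add, neg_add]
    ring
  rw [this]; ring

lemma auxUp_add (p s t : ℝ) : auxUp p (s + t) = auxUp p s * auxUp p t := by
  apply Subtype.ext
  rw [Matrix.SpecialLinearGroup.coe_mul]
  simp only [auxUp]
  rw [Matrix.mul_fin_two, aux_sinh_add]
  simp only [add_mul, neg_add, Real.exp_add, C_mul, C_add]
  congr 1; simp 

lemma auxLo_add (Z : ℝ[X]) (p s t : ℝ) : auxLo Z p (s + t) = auxLo Z p s * auxLo Z p t := by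
  apply Subtype.ext
  rw [Matrix.SpecialLinearGroup.coe_mul]
  simp only [auxLo]
  rw [Matrix.mul_fin_two, add_comm s t, aux_sinh_add]
  simp only [add_mul, neg_add, Real.exp_add, C_mul, C_add]
  refine Matrix.ext fun i j => ?_
  fin_cases i <;> fin_cases j <;> simp <;> ring

lemma auxUp_zpow (p : ℝ) (n : ℤ) : auxUp p 1 ^ n = auxUp p n := by
  simpa using aux_zpow (fun n : ℤ => auxUp p n)
    (fun m n => by rw [← auxUp_add]; congr 1; push_cast; ring) n

lemma auxLo_zpow (Z : ℝ[X]) (p : ℝ) (n : ℤ) : auxLo Z p 1 ^ n = auxLo Z p n := by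
  simpa using aux_zpow (fun n : ℤ => auxLo Z p n)
    (fun m n => by rw [← auxLo_add]; congr 1; push_cast; ring) n

lemma aux_list (l : List (Matrix (Fin 2) (Fin 2) ℝ[X]))
    (hl : ∀ N ∈ l, ∀ i j, (N i j).natDegree ≤ 1) :
    (∀ i j, (l.prod i j).natDegree ≤ l.length) ∧
    l.prod.map (fun P => P.coeff l.length) = (l.map fun N => N.map fun P => P.coeff 1).prod := by
  induction l with
  | nil =>
    refine ⟨fun i j => ?_, ?_⟩
    · fin_cases i <;> fin_cases j <;> simp
    · ext i j
      fin_cases i <;> fin_cases j <;> simp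
  | cons N l ih =>
    have hN := hl N (by simp)
    obtain ⟨h1, h2⟩ := ih (fun M hM => hl M (by simp [hM]))
    refine ⟨fun i j => ?_, ?_⟩
    · rw [List.prod_cons, Matrix.mul_apply, List.length_cons]
      apply natDegree_sum_le_of_forall_le
      intro k _
      refine natDegree_mul_le.trans ?_
      have := hN i k; have := h1 k j; omega
    · rw [List.map_cons, List.prod_cons, List.prod_cons, ← h2]
      ext i j
      simp only [Matrix.map_apply, Matrix.mul_apply, List.length_cons, finsetSum_coeff]
      apply Finset.sum_congr rfl
      intro k _
      rw [add_comm l.length 1]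
      exact coeff_mul_add_eq_of_natDegree_le (hN i k) (h1 k j)

lemma aux_list2 (l : List (ℝ × ℝ)) :
    (l.map fun e => (!![e.1, 0; e.2, 0] : Matrix (Fin 2) (Fin 2) ℝ)).prod 0 0 = (l.map Prod.fst).prod ∧
    (l ≠ [] → (l.map fun e => (!![e.1, 0; e.2, 0] : Matrix (Fin 2) (Fin 2) ℝ)).prod 1 1 = 0) ∧
    (l.map fun e => (!![e.1, 0; e.2, 0] : Matrix (Fin 2) (Fin 2) ℝ)).prod 0 1 = 0 := by
  induction l with
  | nil => simp
  | cons e l ih => simp [Matrix.mul_apply, ih]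

lemma aux_coe_prod (l : List (SL2 ℝ[X])) : ((l.prod : SL2 ℝ[X]) : Matrix (Fin 2) (Fin 2) ℝ[X]) =
    (l.map fun N : SL2 ℝ[X] => (N : Matrix (Fin 2) (Fin 2) ℝ[X])).prod := by
  induction l with
  | nil => simp
  | cons N l ih => simp [ih]

lemma aux_word_coeff {r : ℕ} (hr : 0 < r) (a b : Fin r → ℤ) (p q c : ℝ) :
    let W := Matrix.trace ((wordEval (wordOf a b) (auxUp p 1) (auxLo (X - C c) q 1) : SL2 ℝ[X]) :
      Matrix (Fin 2) (Fin 2) ℝ[X])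
    W.natDegree ≤ r ∧ W.coeff r =
      ∏ i, (Real.sinh (a i * p) / Real.sinh p * (Real.sinh (b i * q) / Real.sinh q)) := by
  intro W
  set l : List (Matrix (Fin 2) (Fin 2) ℝ[X]) :=
    List.ofFn fun i => ((auxUp p (a i) * auxLo (X - C c) q (b i) : SL2 ℝ[X]) :
      Matrix (Fin 2) (Fin 2) ℝ[X]) with hl
  have hlen : l.length = r := by simp [hl]
  have hW : W = Matrix.trace l.prod := by
    simp only [W, aux_wordEval, auxUp_zpow, auxLo_zpow, hl]
    congr 1
    rw [aux_coe_prod, List.map_ofFn]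
    rfl
  have hdeg : ∀ N ∈ l, ∀ i j, (N i j).natDegree ≤ 1 := by
    intro N hN
    rw [hl, List.mem_ofFn] at hN
    obtain ⟨k, rfl⟩ := hN
    intro i j
    rw [Matrix.SpecialLinearGroup.coe_mul]
    simp only [auxUp, auxLo]
    rw [Matrix.mul_fin_two]
    fin_cases i <;> fin_cases j <;> simp <;> compute_degree!
  obtain ⟨h1, h2⟩ := aux_list l hdeg
  rw [hlen] at h1 h2
  set l2 : List (ℝ × ℝ) := List.ofFn fun i =>
    (Real.sinh (a i * p) / Real.sinh p * (Real.sinh (b i * q) / Real.sinh q),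
      Real.exp (-(a i * p)) * (Real.sinh (b i * q) / Real.sinh q)) with hl2
  have h3 : (l.map fun N => N.map fun P => P.coeff 1) =
      l2.map fun e => (!![e.1, 0; e.2, 0] : Matrix (Fin 2) (Fin 2) ℝ) := by
    rw [hl, hl2, List.map_ofFn, List.map_ofFn]
    congr 1
    ext1 k
    simp only [Function.comp, Matrix.SpecialLinearGroup.coe_mul]
    simp only [auxUp, auxLo]
    rw [Matrix.mul_fin_two]
    ext i j
    fin_cases i <;> fin_cases j <;> simp
  obtain ⟨g1, g2, g3⟩ := aux_list2 l2
  rw [← h3, ← h2] at g1 g2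
  have hne : l2 ≠ [] := by
    intro h
    have : l2.length = r := by simp [hl2]
    rw [h] at this; simp at this; omega
  rw [hW, Matrix.trace_fin_two]
  refine ⟨(natDegree_add_le _ _).trans (max_le (h1 _ _) (h1 _ _)), ?_⟩
  have g2 := g2 hne
  simp only [Matrix.map_apply] at g1 g2
  rw [coeff_add, g1, g2, add_zero, hl2, List.map_ofFn, List.prod_ofFn]
  rfl

lemma aux_main {r : ℕ} (hr : 0 < r)
    (a b : Fin r → ℤ) (hab : ∀ i, a i ≠ 0 ∧ b i ≠ 0)
    (f : MvPolynomial (Fin 3) ℤ) (hf : IsTracePolynomial (wordOf a b) f)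
    (Q : MvPolynomial (Fin 3) ℚ)
    (hdec : MvPolynomial.map (Int.castRingHom ℚ) f =
      Polynomial.aeval Q (Polynomial.dickson 1 (1 : ℚ) r))
    (α β : ℝ) (hα : ∑ i, (a i : ℝ) = r * α) (hβ : ∑ i, (b i : ℝ) = r * β)
    (p q : ℝ) (hp : 0 < p) (hq : 0 < q) :
    ∃ G : ℝ, G ^ r = (∏ i, Real.sinh (a i * p)) * ∏ i, Real.sinh (b i * q) ∧
      |G| ≤ Real.cosh (α * p) * Real.cosh (β * q) ∧
      (α * p + β * q ≠ 0 → α * p - β * q ≠ 0 →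
        |Real.sinh (α * p) * Real.sinh (β * q)| ≤ |G|) := by
  have hsp : Real.sinh p ≠ 0 := (Real.sinh_pos_iff.2 hp).ne'
  have hsq : Real.sinh q ≠ 0 := (Real.sinh_pos_iff.2 hq).ne'
  set P : ℝ[X] := MvPolynomial.aeval ![C (2 * Real.cosh p), X, C (2 * Real.cosh q)] Q with hP
  have hPe : ∀ u : ℝ, P.eval u = MvPolynomial.aeval ![2 * Real.cosh p, u, 2 * Real.cosh q] Q := by
    intro u
    have h1 := MvPolynomial.comp_aeval_apply (R := ℚ) (![C (2 * Real.cosh p), X, C (2 * Real.cosh q)] : Fin 3 → ℝ[X])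
      ((Polynomial.aeval u : ℝ[X] →ₐ[ℝ] ℝ).restrictScalars ℚ) Q
    rw [← hP] at h1
    have h2 : ((Polynomial.aeval u : ℝ[X] →ₐ[ℝ] ℝ).restrictScalars ℚ) P = P.eval u := by
      simp [Polynomial.aeval_def, Polynomial.eval₂_eq_eval_map]
    rw [← h2, h1]
    congr 2
    ext i
    fin_cases i <;> simp
  obtain ⟨hWd, hWc⟩ := aux_word_coeff hr a b p q (2 * Real.cosh (p + q))
  have htr : trPoint (auxUp p 1) (auxLo (X - C (2 * Real.cosh (p + q))) q 1) =
      ![C (2 * Real.cosh p), X, C (2 * Real.cosh q)] := by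
    have e : ∀ t : ℝ, 2 * Real.cosh t = Real.exp t + Real.exp (-t) := by
      intro t; rw [Real.cosh_eq]; ring
    unfold trPoint
    rw [Matrix.SpecialLinearGroup.coe_mul]
    simp only [auxUp, auxLo]
    rw [Matrix.mul_fin_two]
    simp only [Matrix.trace_fin_two_of, one_mul, div_self hsp, div_self hsq, e, map_one]
    congr 1
    · simp
    · congr 1
      · simp only [neg_add, Real.exp_add, C_mul, C_add]; ring
      · simp
  rw [aux_eval_dickson _ f hf Q hdec, htr, ← hP] at hWd hWc
  have hcomp : (dickson 1 (1 : ℝ[X]) r).eval P = (dickson 1 (1 : ℝ) r).comp P := by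
    rw [Polynomial.comp, eval₂_eq_eval_map, map_dickson, map_one]
  rw [hcomp] at hWd hWc
  have hprod : (∏ i, (Real.sinh (a i * p) / Real.sinh p * (Real.sinh (b i * q) / Real.sinh q))) ≠ 0 := by
    rw [Finset.prod_ne_zero_iff]
    intro i _
    have h1 : Real.sinh (a i * p) ≠ 0 := by
      rw [Ne, Real.sinh_eq_zero]; exact mul_ne_zero (by exact_mod_cast (hab i).1) hp.ne'
    have h2 : Real.sinh (b i * q) ≠ 0 := by
      rw [Ne, Real.sinh_eq_zero]; exact mul_ne_zero (by exact_mod_cast (hab i).2) hq.ne'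
    exact mul_ne_zero (div_ne_zero h1 hsp) (div_ne_zero h2 hsq)
  have hdD : (dickson 1 (1 : ℝ) r).Monic ∧ (dickson 1 (1 : ℝ) r).natDegree = r := by
    have := (aux_dickson_deg (r - 1)).1
    rwa [Nat.sub_add_cancel hr] at this
  have hdeg : ((dickson 1 (1 : ℝ) r).comp P).natDegree = r :=
    le_antisymm hWd (le_natDegree_of_ne_zero (by rw [hWc]; exact hprod))
  have hP1 : P.natDegree = 1 := by
    rw [natDegree_comp, hdD.2] at hdeg
    exact Nat.eq_of_mul_eq_mul_left hr (by rw [hdeg, mul_one])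
  have hlead : P.coeff 1 ^ r = ∏ i, (Real.sinh (a i * p) / Real.sinh p * (Real.sinh (b i * q) / Real.sinh q)) := by
    rw [← hWc]
    have := leadingCoeff_comp (p := dickson 1 (1 : ℝ) r) (q := P) (by rw [hP1]; simp)
    rw [leadingCoeff, hdeg, hdD.1.leadingCoeff, one_mul, hdD.2, leadingCoeff, hP1] at this
    exact this.symm
  have heval : ∀ u, P.eval u = P.coeff 1 * u + P.coeff 0 := by
    intro u
    conv_lhs => rw [eq_X_add_C_of_natDegree_le_one hP1.le]
    simp
  have hD : ∀ q' : ℝ, Real.cosh q' = Real.cosh q →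
      (dickson 1 (1 : ℝ) r).eval (P.eval (2 * Real.cosh (p + q'))) =
      2 * Real.cosh (p * ∑ i, (a i : ℝ) + q' * ∑ i, (b i : ℝ)) := by
    intro q' hq'
    rw [← auxDiag_word, aux_eval_dickson _ f hf Q hdec, hPe]
    congr 3
    unfold trPoint
    rw [← auxDiag_add, auxDiag_trace, auxDiag_trace, auxDiag_trace, hq']
  have hD1 := hD q rfl
  have hD2 := hD (-q) (Real.cosh_neg q)
  set g1 := P.eval (2 * Real.cosh (p + q)) with hg1
  set g2 := P.eval (2 * Real.cosh (p + -q)) with hg2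
  have k1 := aux_abs_le r hr g1 (α * p + β * q) (by rw [hD1, hα, hβ]; congr 2; ring)
  have k2 := aux_abs_le r hr g2 (α * p - β * q) (by rw [hD2, hα, hβ]; congr 2; ring)
  have hG : g1 - g2 = 4 * (P.coeff 1 * Real.sinh p * Real.sinh q) := by
    rw [hg1, hg2, heval, heval, ← sub_eq_add_neg, Real.cosh_add, Real.cosh_sub]; ring
  rw [Real.cosh_add] at k1
  rw [Real.cosh_sub] at k2
  refine ⟨P.coeff 1 * Real.sinh p * Real.sinh q, ?_, ?_, ?_⟩
  · rw [mul_pow, mul_pow, hlead, Finset.prod_mul_distrib, Finset.prod_div_distrib,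
      Finset.prod_div_distrib]
    simp only [Finset.prod_const, Finset.card_univ, Fintype.card_fin]
    generalize (∏ i, Real.sinh (a i * p)) = A
    generalize (∏ i, Real.sinh (b i * q)) = B
    field_simp
  · have h1 : |4 * (P.coeff 1 * Real.sinh p * Real.sinh q)| ≤ |g1| + |g2| := by
      rw [← hG]; exact abs_sub _ _
    rw [abs_mul, abs_of_pos (by norm_num : (0:ℝ) < 4)] at h1
    linarith [k1.1, k2.1]
  · intro n1 n2
    have e1 := k1.2 n1
    have e2 := k2.2 n2
    have h1 : abs (|g1| - |g2|) ≤ |4 * (P.coeff 1 * Real.sinh p * Real.sinh q)| := by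
      rw [← hG]; exact abs_abs_sub_abs_le _ _
    have h2 : |g1| - |g2| = 4 * (Real.sinh (α * p) * Real.sinh (β * q)) := by
      rw [e1, e2]; ring
    rw [h2, abs_mul, abs_mul 4, abs_of_pos (by norm_num : (0:ℝ) < 4)] at h1
    linarith

lemma aux_same {r : ℕ} (a : Fin r → ℝ) (h : ∑ i, |a i| = |∑ i, a i|) (A : ℝ)
    (hA : ∀ i, |a i| = A) (i j : Fin r) : a i = a j := by
  rcases abs_choice (∑ i, a i) with hc | hc
  · rw [hc] at h
    have h0 : ∑ i, (|a i| - a i) = 0 := by rw [Finset.sum_sub_distrib, h, sub_self]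
    have := (Finset.sum_eq_zero_iff_of_nonneg (fun i _ => sub_nonneg.2 (le_abs_self (a i)))).1 h0
    have h1 := this i (Finset.mem_univ _)
    have h2 := this j (Finset.mem_univ _)
    rw [hA] at h1 h2
    linarith
  · rw [hc] at h
    have h0 : ∑ i, (|a i| + a i) = 0 := by rw [Finset.sum_add_distrib, h]; ring
    have := (Finset.sum_eq_zero_iff_of_nonneg
      (fun i _ => by linarith [neg_abs_le (a i)])).1 h0
    have h1 := this i (Finset.mem_univ _)
    have h2 := this j (Finset.mem_univ _)
    rw [hA] at h1 h2
    linarith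

lemma aux_amgm {r : ℕ} (x y : Fin r → ℝ) (hx : ∀ i, 0 < x i) (hy : ∀ i, 0 < y i)
    (sx : ∑ i, x i = r) (sy : ∑ i, y i = r) (h : 1 ≤ (∏ i, x i) * ∏ i, y i) (k : Fin r) :
    x k = 1 := by
  by_contra hk
  have h1 : 0 ≤ ∑ i, Real.log (x i) + ∑ i, Real.log (y i) := by
    rw [← Real.log_prod (fun i _ => (hx i).ne'), ← Real.log_prod (fun i _ => (hy i).ne'),
      ← Real.log_mul (Finset.prod_pos fun i _ => hx i).ne' (Finset.prod_pos fun i _ => hy i).ne']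
    exact Real.log_nonneg h
  have h2 : ∑ i, Real.log (x i) < ∑ i, (x i - 1) :=
    Finset.sum_lt_sum (fun i _ => Real.log_le_sub_one_of_pos (hx i))
      ⟨k, Finset.mem_univ _, Real.log_lt_sub_one_of_pos (hx k) hk⟩
  have h3 : ∑ i, Real.log (y i) ≤ ∑ i, (y i - 1) :=
    Finset.sum_le_sum (fun i _ => Real.log_le_sub_one_of_pos (hy i))
  rw [Finset.sum_sub_distrib, sx] at h2
  rw [Finset.sum_sub_distrib, sy] at h3
  simp at h2 h3
  linarith

lemma aux_abs_sinh (x : ℝ) : |Real.sinh x| = Real.sinh |x| := by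
  rcases le_total 0 x with h | h
  · rw [abs_of_nonneg h, abs_of_nonneg (Real.sinh_nonneg_iff.2 h)]
  · rw [abs_of_nonpos h, abs_of_nonpos (Real.sinh_nonpos_iff.2 h), Real.sinh_neg]

lemma aux_sinh_lower (x : ℝ) (hx : 1 ≤ x) : Real.exp x / 4 ≤ Real.sinh x := by
  rw [Real.sinh_eq]
  have h1 : 2 ≤ Real.exp x := by linarith [Real.add_one_le_exp x]
  have h2 : Real.exp (-x) ≤ 1 := Real.exp_le_one_iff.2 (by linarith)
  linarith

lemma aux_cosh_upper (x : ℝ) : Real.cosh x ≤ Real.exp |x| := by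
  rw [Real.cosh_eq]
  have h1 : Real.exp x ≤ Real.exp |x| := Real.exp_le_exp.2 (le_abs_self x)
  have h2 : Real.exp (-x) ≤ Real.exp |x| := Real.exp_le_exp.2 (neg_le_abs x)
  linarith

lemma aux_prod_lower {r : ℕ} (a : Fin r → ℤ) (ha : ∀ i, a i ≠ 0) (x : ℝ) (hx : 1 ≤ x) :
    Real.exp ((∑ i, |(a i : ℝ)|) * x) / 4 ^ r ≤ |∏ i, Real.sinh (a i * x)| := by
  have : Real.exp ((∑ i, |(a i : ℝ)|) * x) / 4 ^ r = ∏ i, (Real.exp (|(a i : ℝ)| * x) / 4) := by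
    rw [Finset.prod_div_distrib, ← Real.exp_sum, Finset.sum_mul]; simp
  rw [this, Finset.abs_prod]
  apply Finset.prod_le_prod
  · intro i _; positivity
  · intro i _
    rw [aux_abs_sinh, abs_mul, abs_of_pos (by linarith : 0 < x)]
    apply aux_sinh_lower
    have h1 : (1:ℝ) ≤ |(a i : ℝ)| := by
      have := Int.one_le_abs (ha i)
      exact_mod_cast this
    nlinarith

lemma aux_tendsto (c : ℝ) : Filter.Tendsto (fun t : ℝ => Real.sinh (c * t) / t)
    (nhdsWithin 0 (Set.Ioi 0)) (nhds c) := by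
  have h : HasDerivAt (fun t : ℝ => Real.sinh (c * t)) c 0 := by
    have h1 : HasDerivAt (fun t : ℝ => c * t) c 0 := by simpa using (hasDerivAt_id (0:ℝ)).const_mul c
    simpa using h1.sinh
  have h2 := h.tendsto_slope_zero_right
  simp only [zero_add, mul_zero, Real.sinh_zero, sub_zero, smul_eq_mul] at h2
  refine h2.congr fun t => ?_
  rw [div_eq_inv_mul]

lemma aux_limit {r : ℕ} (x y : Fin r → ℝ)
    (h : ∀ t : ℝ, 0 < t → (Real.sinh (2 * t) * Real.sinh (1 * t)) ^ r ≤
      (∏ i, Real.sinh ((2 * x i) * t)) * ∏ i, Real.sinh (y i * t)) :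
    1 ≤ (∏ i, x i) * ∏ i, y i := by
  have h1 : Filter.Tendsto (fun t : ℝ => (Real.sinh (2 * t) / t * (Real.sinh (1 * t) / t)) ^ r)
    (nhdsWithin 0 (Set.Ioi 0)) (nhds ((2 * 1) ^ r)) := ((aux_tendsto 2).mul (aux_tendsto 1)).pow r
  have h2 : Filter.Tendsto (fun t : ℝ => (∏ i, (Real.sinh ((2 * x i) * t) / t)) *
      ∏ i, (Real.sinh (y i * t) / t))
    (nhdsWithin 0 (Set.Ioi 0)) (nhds ((∏ i, (2 * x i)) * ∏ i, y i)) :=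
    (tendsto_finsetProd _ fun i _ => aux_tendsto _).mul
      (tendsto_finsetProd _ fun i _ => aux_tendsto _)
  have h3 := le_of_tendsto_of_tendsto h1 h2 (by
    filter_upwards [self_mem_nhdsWithin] with t ht
    have ht : 0 < t := ht
    have e1 : (Real.sinh (2 * t) / t * (Real.sinh (1 * t) / t)) ^ r =
      (Real.sinh (2 * t) * Real.sinh (1 * t)) ^ r / (t ^ r * t ^ r) := by
      rw [div_mul_div_comm, div_pow, mul_pow t t]
    have e2 : (∏ i, (Real.sinh ((2 * x i) * t) / t)) * ∏ i, (Real.sinh (y i * t) / t) =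
        ((∏ i, Real.sinh ((2 * x i) * t)) * ∏ i, Real.sinh (y i * t)) / (t ^ r * t ^ r) := by
      rw [Finset.prod_div_distrib, Finset.prod_div_distrib, div_mul_div_comm]; simp
    rw [e1, e2]
    exact div_le_div_of_nonneg_right (h t ht) (by positivity))
  rw [Finset.prod_mul_distrib] at h3
  simp only [Finset.prod_const, Finset.card_univ, Fintype.card_fin, mul_one] at h3
  have h4 : (0:ℝ) < 2 ^ r := by positivity
  rw [mul_assoc] at h3
  exact le_of_mul_le_mul_left (by rwa [mul_one]) h4

end aux

theorem word_eq_power_of_dickson_decomposition_rat {r : ℕ} (hr : 0 < r)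
    (a b : Fin r → ℤ) (hab : ∀ i, a i ≠ 0 ∧ b i ≠ 0)
    (f : MvPolynomial (Fin 3) ℤ) (hf : IsTracePolynomial (wordOf a b) f)
    (q : MvPolynomial (Fin 3) ℚ)
    (hdec : MvPolynomial.map (Int.castRingHom ℚ) f =
      Polynomial.aeval q (Polynomial.dickson 1 (1 : ℚ) r)) :
    ∀ i, a i = a ⟨0, hr⟩ ∧ b i = b ⟨0, hr⟩ := by
  have hr' : (0:ℝ) < r := by exact_mod_cast hr
  obtain ⟨α, hα⟩ : ∃ α : ℝ, ∑ i, (a i : ℝ) = r * α := ⟨(∑ i, (a i : ℝ)) / r, by field_simp⟩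
  obtain ⟨β, hβ⟩ : ∃ β : ℝ, ∑ i, (b i : ℝ) = r * β := ⟨(∑ i, (b i : ℝ)) / r, by field_simp⟩
  have main := aux_main hr a b hab f hf q hdec α β hα hβ
  have ha1 : |∑ i, (a i : ℝ)| ≤ ∑ i, |(a i : ℝ)| := Finset.abs_sum_le_sum_abs _ _
  have hb1 : |∑ i, (b i : ℝ)| ≤ ∑ i, |(b i : ℝ)| := Finset.abs_sum_le_sum_abs _ _
  have hST : ∑ i, |(a i : ℝ)| + ∑ i, |(b i : ℝ)| ≤ |∑ i, (a i : ℝ)| + |∑ i, (b i : ℝ)| := by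
    by_contra hlt
    rw [not_le] at hlt
    set S := ∑ i, |(a i : ℝ)| + ∑ i, |(b i : ℝ)| with hS
    set T := |∑ i, (a i : ℝ)| + |∑ i, (b i : ℝ)| with hT
    have hδ : 0 < S - T := sub_pos.2 hlt
    set K : ℝ := 4 ^ r * 4 ^ r with hK
    have hKpos : 0 < K := by positivity
    set x := 1 + K / (S - T) with hx
    have hx1 : 1 ≤ x := by rw [hx]; linarith [div_pos hKpos hδ]
    obtain ⟨G, hG1, hG2, -⟩ := main x x (by linarith) (by linarith)
    have l1 := aux_prod_lower a (fun i => (hab i).1) x hx1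
    have l2 := aux_prod_lower b (fun i => (hab i).2) x hx1
    have l3 : Real.exp (S * x) / K ≤ |G| ^ r := by
      rw [← abs_pow, hG1, abs_mul]
      refine le_trans (le_of_eq ?_) (mul_le_mul l1 l2 (by positivity) (abs_nonneg _))
      rw [hS, hK, add_mul, Real.exp_add, div_mul_div_comm]
    have l4 : |G| ^ r ≤ Real.exp (T * x) := by
      have : |G| ≤ Real.exp |α * x| * Real.exp |β * x| :=
        hG2.trans (mul_le_mul (aux_cosh_upper _) (aux_cosh_upper _) (Real.cosh_pos _).le
          (Real.exp_pos _).le)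
      refine (pow_le_pow_left₀ (abs_nonneg _) this r).trans (le_of_eq ?_)
      rw [← Real.exp_add, ← Real.exp_nat_mul, hT, hα, hβ, abs_mul, abs_mul, abs_mul, abs_mul,
        abs_of_pos (by linarith : 0 < x), abs_of_pos hr']
      congr 1; ring
    have l5 : Real.exp (S * x) ≤ K * Real.exp (T * x) := by
      have := l3.trans l4
      rwa [div_le_iff₀ hKpos, mul_comm _ K] at this
    have l6 : Real.exp (S * x) = Real.exp ((S - T) * x) * Real.exp (T * x) := by
      rw [← Real.exp_add]; congr 1; ring
    rw [l6] at l5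
    have l7 := le_of_mul_le_mul_right l5 (Real.exp_pos _)
    have l8 : (S - T) * x = (S - T) + K := by rw [hx]; field_simp
    have l9 := Real.add_one_le_exp ((S - T) * x)
    linarith
  have haS : ∑ i, |(a i : ℝ)| = |∑ i, (a i : ℝ)| := by linarith
  have hbS : ∑ i, |(b i : ℝ)| = |∑ i, (b i : ℝ)| := by linarith
  have hpa : ∀ i, 0 < |(a i : ℝ)| := fun i => abs_pos.2 (by exact_mod_cast (hab i).1)
  have hpb : ∀ i, 0 < |(b i : ℝ)| := fun i => abs_pos.2 (by exact_mod_cast (hab i).2)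
  have haα : ∑ i, |(a i : ℝ)| = r * |α| := by rw [haS, hα, abs_mul, abs_of_pos hr']
  have hbβ : ∑ i, |(b i : ℝ)| = r * |β| := by rw [hbS, hβ, abs_mul, abs_of_pos hr']
  have hα0 : 0 < |α| := by
    have : 0 < ∑ i, |(a i : ℝ)| := Finset.sum_pos (fun i _ => hpa i) ⟨⟨0, hr⟩, Finset.mem_univ _⟩
    rw [haα] at this
    exact pos_of_mul_pos_right this hr'.le
  have hβ0 : 0 < |β| := by
    have : 0 < ∑ i, |(b i : ℝ)| := Finset.sum_pos (fun i _ => hpb i) ⟨⟨0, hr⟩, Finset.mem_univ _⟩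
    rw [hbβ] at this
    exact pos_of_mul_pos_right this hr'.le
  have hx : ∑ i, |(a i : ℝ)| / |α| = r := by
    rw [← Finset.sum_div, haα]; field_simp
  have hy : ∑ i, |(b i : ℝ)| / |β| = r := by
    rw [← Finset.sum_div, hbβ]; field_simp
  have hge : 1 ≤ (∏ i, (|(a i : ℝ)| / |α|)) * ∏ i, (|(b i : ℝ)| / |β|) := by
    apply aux_limit
    intro t ht
    obtain ⟨G, hG1, -, hG3⟩ := main (2 * t / |α|) (t / |β|) (by positivity) (by positivity)
    have e1 : |α * (2 * t / |α|)| = 2 * t := by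
      rw [abs_mul, abs_of_pos (by positivity : 0 < 2 * t / |α|)]; field_simp
    have e2 : |β * (t / |β|)| = 1 * t := by
      rw [abs_mul, abs_of_pos (by positivity : 0 < t / |β|)]; field_simp
    have n1 : α * (2 * t / |α|) + β * (t / |β|) ≠ 0 := by
      intro h0
      rw [eq_neg_of_add_eq_zero_left h0, abs_neg, e2] at e1
      linarith
    have n2 : α * (2 * t / |α|) - β * (t / |β|) ≠ 0 := by
      intro h0
      rw [sub_eq_zero.1 h0, e2] at e1
      linarith
    have h3 := hG3 n1 n2
    rw [abs_mul, aux_abs_sinh, aux_abs_sinh, e1, e2] at h3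
    have hs2 : 0 ≤ Real.sinh (2 * t) := Real.sinh_nonneg_iff.2 (by linarith)
    have hs1 : 0 ≤ Real.sinh (1 * t) := Real.sinh_nonneg_iff.2 (by linarith)
    refine (pow_le_pow_left₀ (mul_nonneg hs2 hs1) h3 r).trans (le_of_eq ?_)
    rw [← abs_pow, hG1, abs_mul, Finset.abs_prod, Finset.abs_prod]
    congr 1
    · refine Finset.prod_congr rfl fun i _ => ?_
      rw [aux_abs_sinh, abs_mul, abs_of_pos (by positivity : 0 < 2 * t / |α|)]
      congr 1; ring
    · refine Finset.prod_congr rfl fun i _ => ?_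
      rw [aux_abs_sinh, abs_mul, abs_of_pos (by positivity : 0 < t / |β|)]
      congr 1; ring
  have hxa : ∀ i, |(a i : ℝ)| = |α| := fun i =>
    (div_eq_one_iff_eq hα0.ne').1 (aux_amgm _ _ (fun i => div_pos (hpa i) hα0)
      (fun i => div_pos (hpb i) hβ0) hx hy hge i)
  have hyb : ∀ i, |(b i : ℝ)| = |β| := fun i =>
    (div_eq_one_iff_eq hβ0.ne').1 (aux_amgm _ _ (fun i => div_pos (hpb i) hβ0)
      (fun i => div_pos (hpa i) hα0) hy hx (by rw [mul_comm]; exact hge) i)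
  intro i
  have r1 := aux_same (fun i => (a i : ℝ)) haS _ hxa i ⟨0, hr⟩
  have r2 := aux_same (fun i => (b i : ℝ)) hbS _ hyb i ⟨0, hr⟩
  exact ⟨by exact_mod_cast r1, by exact_mod_cast r2⟩
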